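/- For all integers ℘ ≥ 1 and n′ ≥ 2, the point (℘·n′, ℘·(n′−1)) is not a possible A0′; that is, no admissible chain has end point (℘n′, ℘(n′−1)). -/

import Mathlib

open MvPolynomial

noncomputable section

variable {K : Type*} [Field K] [CharZero K]

/-- The support of `P` as a set of pairs `(i,j)` of exponents of `x^i y^j`. -/
def Supp (P : MvPolynomial (Fin 2) K) : Set (ℕ × ℕ) :=
  {p | MvPolynomial.coeff (Finsupp.single 0 p.1 + Finsupp.single 1 p.2) P ≠ 0}

/-- The Jacobian bracket `[P,Q] = ∂ₓP ∂_yQ − ∂ₓQ ∂_yP`. -/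
def Jb (P Q : MvPolynomial (Fin 2) K) : MvPolynomial (Fin 2) K :=
  pderiv 0 P * pderiv 1 Q - pderiv 0 Q * pderiv 1 P

/-- The `(ρ,σ)`-degree `v_{ρ,σ}(P)` (the maximum of `ρi+σj` on the support). -/
def wdeg (ρ σ : ℤ) (P : MvPolynomial (Fin 2) K) : ℤ :=
  sSup {d : ℤ | ∃ p ∈ Supp P, d = ρ * (p.1 : ℤ) + σ * (p.2 : ℤ)}

/-- The support of the `(ρ,σ)`-leading form of `P`. -/
def LeadSupp (ρ σ : ℤ) (P : MvPolynomial (Fin 2) K) : Set (ℕ × ℕ) :=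
  {p | p ∈ Supp P ∧ ρ * (p.1 : ℤ) + σ * (p.2 : ℤ) = wdeg ρ σ P}

/-- `P` is `(ρ,σ)`-homogeneous. -/
def IsHomog (ρ σ : ℤ) (P : MvPolynomial (Fin 2) K) : Prop :=
  ∀ p ∈ Supp P, ∀ q ∈ Supp P,
    ρ * (p.1 : ℤ) + σ * (p.2 : ℤ) = ρ * (q.1 : ℤ) + σ * (q.2 : ℤ)

/-- `P` is a monomial: its support has at most one point. -/
def IsMonomial (P : MvPolynomial (Fin 2) K) : Prop := (Supp P).Subsingleton

/-- `e` is the point `en_{ρ,σ}(P)`: the point of the support of the leading form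
with largest second coordinate. -/
def IsEn (ρ σ : ℤ) (P : MvPolynomial (Fin 2) K) (e : ℕ × ℕ) : Prop :=
  e ∈ LeadSupp ρ σ P ∧ ∀ q ∈ LeadSupp ρ σ P, q.2 ≤ e.2

/-- `e` is the point `st_{ρ,σ}(P)`: the point of the support of the leading form
with smallest second coordinate. -/
def IsSt (ρ σ : ℤ) (P : MvPolynomial (Fin 2) K) (e : ℕ × ℕ) : Prop :=
  e ∈ LeadSupp ρ σ P ∧ ∀ q ∈ LeadSupp ρ σ P, e.2 ≤ q.2

/-- An admissible chain of length `k`: points `C 0, …, C k`, polynomials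
`Rp 1, …, Rp k` and directions `dir 1, …, dir k` satisfying conditions
(i)–(viii) of Definition "cadena admisible". -/
structure AdmChain (K : Type*) [Field K] [CharZero K] (k : ℕ) where
  C : ℕ → ℕ × ℕ
  Rp : ℕ → MvPolynomial (Fin 2) K
  dir : ℕ → ℤ × ℤ
  hdir : ∀ j, 1 ≤ j → j ≤ k →
    Int.gcd (dir j).1 (dir j).2 = 1 ∧ 0 < (dir j).1 ∧ (dir j).1 + (dir j).2 < 0
  hC0 : ∃ l : ℕ, 1 ≤ l ∧ C 0 = (l, 0)
  hincr : ∀ j, 2 ≤ j → j ≤ k →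
    0 < (dir (j - 1)).1 * (dir j).2 - (dir (j - 1)).2 * (dir j).1
  hhom : ∀ j, 1 ≤ j → j ≤ k → IsHomog (dir j).1 (dir j).2 (Rp j)
  hmono : ∀ j, 1 ≤ j → j ≤ k → ¬ IsMonomial (Rp j)
  hst : ∀ j, 1 ≤ j → j ≤ k → IsSt (dir j).1 (dir j).2 (Rp j) (C (j - 1))
  hen : ∀ j, 1 ≤ j → j ≤ k → IsEn (dir j).1 (dir j).2 (Rp j) (C j)
  hdiag : ∀ j, 1 ≤ j → j ≤ k → (C j).2 < (C j).1
  hval : ∀ j, 1 ≤ j → j ≤ k →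
    (dir j).1 ≤ (dir j).1 * ((C j).1 : ℤ) + (dir j).2 * ((C j).2 : ℤ)
  hG : ∀ j, 1 ≤ j → j ≤ k → ∃ (G : MvPolynomial (Fin 2) K) (i : ℕ), 1 ≤ i ∧
    IsHomog (dir j).1 (dir j).2 G ∧ Jb G (Rp j) = (Rp j) ^ i

/-- A point of `ℕ × ℕ` is a possible `A₀′` if it is the end point of some
admissible chain. -/
def PossibleA0 (K : Type*) [Field K] [CharZero K] (p : ℕ × ℕ) : Prop :=
  ∃ (k : ℕ) (ch : AdmChain K k), ch.C k = p

/-!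
Only the last edge `R` of a chain matters: if its upper end `(a, b)` has weight `v = ρ a + σ b > 0`,
then `v < a - b`. For `(a, b) = (℘ n', ℘ (n' - 1))` this is absurd, since `a - b = ℘` divides `v`.

To bound `v`, set `x = 1`. Let `f = R(1, y)`, `g = G(1, y)`, `ε = -(ρ + σ)` and write the exponent
in `[G, R] = R ^ (i + 1)` with a shift. Euler's identity turns this equation into
`(i v - ε) g f' - v f g' = ρ f ^ (i + 1)`, and as `deg f = b` the bound reads `ρ v < ε deg f + v`.
Suppose it fails.

* Then `f ^ i` divides `g`. Indeed, let the irreducible `p` divide `f` exactly `m` times and `g`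
  exactly `n < i m` times. Comparing the orders of both sides at `p` forces `ε m = v (i m - n)`. By
  homogeneity the exponents of `f` are congruent modulo `ρ`; for `p ≠ y` this gives `ρ m ≤ deg f`,
  because `m` is smaller than the number of terms of `f`. The exponents of `g` are congruent to
  `i k + 1` for each exponent `k` of `f`; for `p = y` this gives `ρ ≤ i m - n + 1`. Both contradict
  the failure of the bound.
* Writing `g = f ^ i h`, the equation becomes `ε f' h + v f h' = -ρ f`, so `deg h ≤ 1`. As `ρ ≥ 2`,
  the second-highest coefficient of `f` vanishes, and comparing coefficients shows that `f` is a
  monomial, which it is not.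
-/

section Univariate

open Polynomial (derivative)
open scoped Polynomial

lemma coeff_X_mul_derivative {A : Type*} [Semiring A] (f : A[X]) (n : ℕ) :
    (Polynomial.X * derivative f).coeff n = f.coeff n * n := by
  cases n with
  | zero => simp
  | succ n => rw [Polynomial.coeff_X_mul, Polynomial.coeff_derivative, Nat.cast_succ]

lemma natDegree_X_mul_derivative_le {A : Type*} [Semiring A] (f : A[X]) :
    (Polynomial.X * derivative f).natDegree ≤ f.natDegree := by
  refine Polynomial.natDegree_le_iff_coeff_eq_zero.2 fun n hn => ?_
  rw [coeff_X_mul_derivative, Polynomial.coeff_eq_zero_of_natDegree_lt hn, zero_mul]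

lemma mul_derivative_pow_mul {A : Type*} [CommSemiring A] (p q : A[X]) (k : ℕ) :
    p * derivative (p ^ k * q) = p ^ k * (k * (derivative p * q) + p * derivative q) := by
  cases k with
  | zero => simp
  | succ k =>
    rw [Polynomial.derivative_mul, Polynomial.derivative_pow_succ, map_add, map_one, map_natCast]
    push_cast
    ring

/-- The bracket that `[G, R]` induces, up to the factor `ρ`, on the dehomogenizations `g` and `f`
of `G` and `R` when these have weights `a` and `b`; see `mul_dehomogenize_Jb`. For `a = b = 1` it is
`Polynomial.wronskian g f`. -/
def weightedWronskian {A : Type*} [CommRing A] (a b : ℤ) (f g : A[X]) : A[X] :=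
  a * (g * derivative f) - b * (f * derivative g)

lemma mul_weightedWronskian_pow_mul {A : Type*} [CommRing A] (a b : ℤ) (p f g : A[X]) (m n : ℕ) :
    p * weightedWronskian a b (p ^ m * f) (p ^ n * g) =
      p ^ (m + n) *
        ((a * m - b * n) * (derivative p * (f * g)) + p * weightedWronskian a b f g) := by
  unfold weightedWronskian
  linear_combination a * (p ^ n * g) * mul_derivative_pow_mul p f m -
    b * (p ^ m * f) * mul_derivative_pow_mul p g n

variable {F : Type*} [Field F] {f g h p : F[X]}

lemma multiplicity_eq_natTrailingDegree_of_dvd_X (hp : Irreducible p) (hpX : p ∣ Polynomial.X)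
    (hf : f ≠ 0) : multiplicity p f = f.natTrailingDegree := by
  classical
  have hassoc : Associated p Polynomial.X := hp.associated_of_dvd Polynomial.irreducible_X hpX
  rw [multiplicity_eq_of_emultiplicity_eq (emultiplicity_eq_of_associated_left hassoc.symm)]
  simpa [Polynomial.rootMultiplicity_eq_multiplicity, hf] using
    f.rootMultiplicity_eq_natTrailingDegree'

lemma one_lt_card_support_of_dvd (hp : Irreducible p) (hpX : ¬ p ∣ Polynomial.X)
    (hf : f ≠ 0) (hpf : p ∣ f) : 1 < f.support.card := by
  by_contra! hcard
  obtain ⟨n, c, rfl⟩ := Polynomial.card_support_le_one_iff_monomial.1 hcard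
  have hc : IsUnit (Polynomial.C c) := Polynomial.isUnit_C.2 (by simpa using hf : c ≠ 0).isUnit
  rw [← Polynomial.C_mul_X_pow_eq_monomial, hc.dvd_mul_left] at hpf
  exact hpX (hp.prime.dvd_of_dvd_pow hpf)

variable [CharZero F]

lemma not_dvd_derivative_of_irreducible (hp : Irreducible p) : ¬ p ∣ derivative p :=
  fun h => hp.not_isUnit (hp.separable.isUnit_of_dvd' dvd_rfl h)

lemma lt_multiplicity_add_multiplicity {a b : ℤ} {r : ℕ} (hp : Irreducible p)
    (hf : f ≠ 0) (hg : g ≠ 0) (hab : a * multiplicity p f ≠ b * multiplicity p g)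
    (hr : p ^ r ∣ weightedWronskian a b f g) :
    r < multiplicity p f + multiplicity p g := by
  obtain ⟨f', hf', hpf⟩ :=
    (FiniteMultiplicity.of_prime_left hp.prime hf).exists_eq_pow_mul_and_not_dvd
  obtain ⟨g', hg', hpg⟩ :=
    (FiniteMultiplicity.of_prime_left hp.prime hg).exists_eq_pow_mul_and_not_dvd
  set m := multiplicity p f
  set n := multiplicity p g
  by_contra! hle
  have hdvd := mul_dvd_mul_left p ((pow_dvd_pow p hle).trans hr)
  rw [hf', hg', mul_weightedWronskian_pow_mul, mul_comm p,
    mul_dvd_mul_iff_left (pow_ne_zero _ hp.ne_zero), dvd_add_left (dvd_mul_right _ _)] at hdvd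
  have hunit : IsUnit ((a : F[X]) * m - b * n) := by
    have hc : ((a * m - b * n : ℤ) : F) ≠ 0 := Int.cast_ne_zero.2 (sub_ne_zero.2 hab)
    simpa using Polynomial.isUnit_C.2 hc.isUnit
  rw [hunit.dvd_mul_left, hp.prime.dvd_mul, hp.prime.dvd_mul] at hdvd
  exact hdvd.elim (not_dvd_derivative_of_irreducible hp) (·.elim hpf hpg)

lemma lt_card_support_of_pow_dvd {m : ℕ} (hp : Irreducible p) (hpX : ¬ p ∣ Polynomial.X)
    (hf : f ≠ 0) (hm : p ^ m ∣ f) : m < f.support.card := by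
  induction m generalizing f with
  | zero => exact Finset.card_pos.2 (Polynomial.nonempty_support_iff.2 hf)
  | succ m ih =>
    obtain ⟨s, hs⟩ := Polynomial.nonempty_support_iff.2 hf
    -- `X * f' - s * f` has the terms of `f` other than the one of exponent `s`, up to units.
    set θf := Polynomial.X * derivative f - (s : F[X]) * f with hθf
    have hsupp : θf.support = f.support.erase s := by
      ext j
      have hcoeff : θf.coeff j = (j - s) * f.coeff j := by
        rw [hθf, Polynomial.coeff_sub, coeff_X_mul_derivative, Polynomial.coeff_natCast_mul]
        ring
      rw [Finset.mem_erase, Polynomial.mem_support_iff, Polynomial.mem_support_iff, hcoeff,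
        mul_ne_zero_iff, sub_ne_zero, Nat.cast_inj.ne]
    have hcard : θf.support.card + 1 = f.support.card := by
      rw [hsupp, Finset.card_erase_add_one hs]
    have hθf0 : θf ≠ 0 := by
      have := one_lt_card_support_of_dvd hp hpX hf ((dvd_pow_self p m.succ_ne_zero).trans hm)
      rw [← Polynomial.nonempty_support_iff, ← Finset.card_pos]
      omega
    have hθdvd : p ^ m ∣ θf := dvd_sub
      ((Polynomial.pow_sub_one_dvd_derivative_of_pow_dvd hm).mul_left _)
      (((pow_dvd_pow p m.le_succ).trans hm).mul_left _)
    have := ih hθf0 hθdvd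
    omega

lemma mul_multiplicity_le_natDegree {ρ : ℕ} (hp : Irreducible p)
    (hpX : ¬ p ∣ Polynomial.X) (hf : f ≠ 0)
    (hfρ : ∀ j ∈ f.support, ∀ k ∈ f.support, j ≡ k [MOD ρ]) :
    ρ * multiplicity p f ≤ f.natDegree := by
  have hcard : f.support.card ≤ (Finset.range (f.natDegree / ρ + 1)).card := by
    refine Finset.card_le_card_of_injOn (· / ρ) (fun j hj => ?_) fun j hj k hk hjk => ?_
    · exact Finset.mem_coe.2 (Finset.mem_range_succ_iff.2
        (Nat.div_le_div_right (Polynomial.le_natDegree_of_mem_supp j hj)))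
    · rw [← Nat.div_add_mod j ρ, ← Nat.div_add_mod k ρ, hfρ j hj k hk]
      exact congrArg (ρ * · + k % ρ) hjk
  have hlt := lt_card_support_of_pow_dvd hp hpX hf (pow_multiplicity_dvd p f)
  rw [Finset.card_range] at hcard
  exact (Nat.mul_le_mul_left ρ (by omega)).trans (Nat.mul_div_le f.natDegree ρ)

lemma mul_multiplicity_eq_of_weightedWronskian_eq {ρ ε v i k : ℕ} (hp : Irreducible p)
    (hf : f ≠ 0) (hg : g ≠ 0) (hk0 : 0 < k) (hk : i * multiplicity p f = multiplicity p g + k)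
    (hfg : weightedWronskian (i * v - ε) v f g = (ρ : F[X]) * f ^ (i + 1)) :
    ε * multiplicity p f = v * k := by
  have hbal : (i * v - ε : ℤ) * multiplicity p f = v * multiplicity p g := by
    by_contra hne
    have hpow : p ^ ((i + 1) * multiplicity p f) ∣ weightedWronskian (i * v - ε) v f g := by
      rw [hfg, mul_comm (i + 1), pow_mul]
      exact (pow_dvd_pow_of_dvd (pow_multiplicity_dvd p f) _).mul_left _
    have := lt_multiplicity_add_multiplicity hp hf hg hne hpow
    linarith
  zify at hk ⊢
  linear_combination v * hk - hbal

lemma pow_dvd_of_weightedWronskian_eq {ρ ε v i : ℕ} (hε : 0 < ε) (hf0 : f ≠ 0) (hg0 : g ≠ 0)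
    (hfρ : ∀ j ∈ f.support, ∀ k ∈ f.support, j ≡ k [MOD ρ])
    (hgρ : ∀ j ∈ g.support, ∀ k ∈ f.support, j ≡ i * k + 1 [MOD ρ])
    (hfmon : f.natTrailingDegree < f.natDegree) (hdeg : ε * f.natDegree + v ≤ ρ * v)
    (hfg : weightedWronskian (i * v - ε) v f g = (ρ : F[X]) * f ^ (i + 1)) :
    f ^ i ∣ g := by
  rw [UniqueFactorizationMonoid.dvd_iff_emultiplicity_le (pow_ne_zero i hf0)]
  intro p hp
  have hmf := FiniteMultiplicity.of_prime_left hp hf0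
  have hmg := FiniteMultiplicity.of_prime_left hp hg0
  rw [emultiplicity_pow hp, hmf.emultiplicity_eq_multiplicity, hmg.emultiplicity_eq_multiplicity]
  norm_cast
  by_contra! hlt
  obtain ⟨k, hk0, hk⟩ : ∃ k, 0 < k ∧ i * multiplicity p f = multiplicity p g + k :=
    ⟨_, Nat.sub_pos_of_lt hlt, (Nat.add_sub_of_le hlt.le).symm⟩
  have hεm := mul_multiplicity_eq_of_weightedWronskian_eq hp.irreducible hf0 hg0 hk0 hk hfg
  by_cases hpX : p ∣ Polynomial.X
  · have hmX {q : F[X]} (hq : q ≠ 0) : multiplicity p q = q.natTrailingDegree :=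
      multiplicity_eq_natTrailingDegree_of_dvd_X hp.irreducible hpX hq
    rw [hmX hf0, hmX hg0] at hk
    rw [hmX hf0] at hεm
    have hmod := hgρ _ (Polynomial.natTrailingDegree_mem_support_of_nonzero hg0)
      _ (Polynomial.natTrailingDegree_mem_support_of_nonzero hf0)
    have hρk : ρ ≤ k + 1 := by
      rw [hk, add_assoc] at hmod
      exact Nat.le_of_dvd k.succ_pos ((Nat.modEq_zero_iff_dvd).1
        (Nat.ModEq.add_left_cancel' g.natTrailingDegree hmod.symm))
    have : ρ * v < ε * f.natDegree + v := calc
      ρ * v ≤ (k + 1) * v := by gcongr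
      _ = ε * f.natTrailingDegree + v := by rw [hεm]; ring
      _ < ε * f.natDegree + v := by gcongr
    omega
  · have hρm := mul_multiplicity_le_natDegree hp.irreducible hpX hf0 hfρ
    have : ρ * v ≤ ε * f.natDegree := calc
      ρ * v ≤ ρ * (v * k) := by gcongr; exact Nat.le_mul_of_pos_right v hk0
      _ = ε * (ρ * multiplicity p f) := by rw [← hεm]; ring
      _ ≤ ε * f.natDegree := by gcongr
    have : 0 < ε * f.natDegree := Nat.mul_pos hε (by omega)
    obtain rfl : v = 0 := by omega
    omega

lemma natDegree_le_one_of_cofactor_eq {ρ ε v : ℕ} (hv : 0 < v) (hf : f ≠ 0)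
    (hfh : (ε : F[X]) * (derivative f * h) + (v : F[X]) * (f * derivative h) = -(ρ : F[X]) * f) :
    h.natDegree ≤ 1 := by
  by_contra! hh
  have hh0 : h ≠ 0 := by
    rintro rfl
    simp at hh
  have hX : (ε : F[X]) * (Polynomial.X * derivative f * h) +
      (v : F[X]) * (f * (Polynomial.X * derivative h)) =
        -((ρ : F[X]) * (Polynomial.X * f)) := by
    linear_combination Polynomial.X * hfh
  have hXf : (Polynomial.X * f).coeff (f.natDegree + h.natDegree) = 0 :=
    Polynomial.coeff_eq_zero_of_natDegree_lt (by rw [Polynomial.natDegree_X_mul hf]; omega)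
  have htop : (ε * f.natDegree + v * h.natDegree : F) * (f.leadingCoeff * h.leadingCoeff) = 0 := by
    have hcoeff := congrArg (Polynomial.coeff · (f.natDegree + h.natDegree)) hX
    simp only [Polynomial.coeff_add, Polynomial.coeff_natCast_mul, Polynomial.coeff_neg,
      Polynomial.coeff_mul_add_eq_of_natDegree_le (natDegree_X_mul_derivative_le f) le_rfl,
      Polynomial.coeff_mul_add_eq_of_natDegree_le le_rfl (natDegree_X_mul_derivative_le h),
      coeff_X_mul_derivative, hXf, Polynomial.coeff_natDegree] at hcoeff
    linear_combination hcoeff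
  have hpos : 0 < ε * f.natDegree + v * h.natDegree := by positivity
  exact mul_ne_zero (by exact_mod_cast hpos.ne') (mul_ne_zero
    (Polynomial.leadingCoeff_ne_zero.2 hf) (Polynomial.leadingCoeff_ne_zero.2 hh0)) htop

lemma coeff_recurrence_of_cofactor_eq {A : Type*} [CommRing A] {f : A[X]} {ρ ε v : ℕ} {c d : A}
    (hfh : (ε : A[X]) * (derivative f * (Polynomial.C c * Polynomial.X + Polynomial.C d)) +
      (v : A[X]) * (f * derivative (Polynomial.C c * Polynomial.X + Polynomial.C d)) =
        -(ρ : A[X]) * f) (j : ℕ) :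
    (ε * c * j + v * c + ρ) * f.coeff j + ε * d * (j + 1) * f.coeff (j + 1) = 0 := by
  have hE : Polynomial.C (ε * c : A) * (Polynomial.X * derivative f) +
      Polynomial.C (ε * d : A) * derivative f + Polynomial.C (v * c + ρ : A) * f = 0 := by
    simp only [map_mul, map_add, map_natCast, Polynomial.derivative_mul,
      Polynomial.derivative_C, Polynomial.derivative_X] at hfh ⊢
    linear_combination hfh
  have hj := congrArg (Polynomial.coeff · j) hE
  simp only [Polynomial.coeff_add, Polynomial.coeff_C_mul, coeff_X_mul_derivative,
    Polynomial.coeff_derivative, Polynomial.coeff_zero] at hj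
  linear_combination hj

lemma support_subsingleton_of_cofactor_eq {ρ ε v : ℕ} (hε : 0 < ε) (hv : 0 < v) (hρ : 0 < ρ)
    (hnext : f.nextCoeff = 0)
    (hfh : (ε : F[X]) * (derivative f * h) + (v : F[X]) * (f * derivative h) = -(ρ : F[X]) * f) :
    (f.support : Set ℕ).Subsingleton := by
  rcases eq_or_ne f 0 with rfl | hf
  · simp
  obtain ⟨c, d, rfl⟩ := Polynomial.exists_eq_X_add_C_of_natDegree_le_one
    (natDegree_le_one_of_cofactor_eq hv hf hfh)
  have hε' : (ε : F) ≠ 0 := Nat.cast_ne_zero.2 hε.ne'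
  have hcoeff := coeff_recurrence_of_cofactor_eq hfh
  rcases hB : f.natDegree with _ | B
  · rw [Polynomial.eq_C_of_natDegree_eq_zero hB]
    exact fun j hj k hk => by simp_all [Polynomial.coeff_C]
  have hlead : f.coeff (B + 1) ≠ 0 := by
    rwa [← hB, Polynomial.coeff_natDegree, Polynomial.leadingCoeff_ne_zero]
  have hd : d = 0 := by
    rw [Polynomial.nextCoeff_of_natDegree_pos (by omega), hB] at hnext
    have hB1 : (B + 1 : F) ≠ 0 := B.cast_add_one_ne_zero
    simpa [show f.coeff B = 0 from hnext, hε', hlead, hB1] using hcoeff B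
  have hsupp {j : ℕ} (hj : j ∈ f.support) : (ε * c * j + v * c + ρ : F) = 0 := by
    simpa [hd, Polynomial.mem_support_iff.1 hj] using hcoeff j
  have hc : c ≠ 0 := by
    rintro rfl
    simpa [hρ.ne'] using hsupp (Polynomial.mem_support_iff.2 hlead)
  intro j hj k hk
  have : (ε * c) * (j : F) = (ε * c) * k := by linear_combination hsupp hj - hsupp hk
  exact_mod_cast mul_left_cancel₀ (mul_ne_zero hε' hc) this

lemma nextCoeff_eq_zero_of_support_modEq {A : Type*} [Semiring A] {f : A[X]} {ρ : ℕ} (hρ : 1 < ρ)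
    (hfρ : ∀ j ∈ f.support, ∀ k ∈ f.support, j ≡ k [MOD ρ]) : f.nextCoeff = 0 := by
  rcases Nat.eq_zero_or_pos f.natDegree with hdeg | hdeg
  · exact Polynomial.nextCoeff_eq_zero.2 (.inl hdeg)
  have hf : f ≠ 0 := Polynomial.ne_zero_of_natDegree_gt hdeg
  rw [Polynomial.nextCoeff_of_natDegree_pos hdeg]
  by_contra hne
  have hmod := hfρ _ (Polynomial.mem_support_iff.2 hne) _
    (Polynomial.natDegree_mem_support_of_nonzero hf)
  rw [Nat.modEq_iff_dvd' (Nat.sub_le _ _), Nat.sub_sub_self hdeg, Nat.dvd_one] at hmod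
  exact hρ.ne' hmod

lemma cofactor_eq_of_weightedWronskian_pow_mul_eq {A : Type*} [CommRing A] [IsDomain A]
    {f h : A[X]} {ρ ε v i : ℕ} (hf : f ≠ 0)
    (hfh : weightedWronskian (i * v - ε) v f (f ^ i * h) = (ρ : A[X]) * f ^ (i + 1)) :
    (ε : A[X]) * (derivative f * h) + (v : A[X]) * (f * derivative h) = -(ρ : A[X]) * f := by
  have hpow : f * derivative (f ^ i) = i * f ^ i * derivative f := by
    simpa [mul_comm, mul_assoc] using mul_derivative_pow_mul f 1 i
  refine mul_left_cancel₀ (pow_ne_zero i hf) ?_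
  rw [weightedWronskian, Polynomial.derivative_mul] at hfh
  push_cast at hfh
  linear_combination -hfh - v * h * hpow

lemma mul_lt_of_weightedWronskian_eq {ρ ε v i : ℕ} (hε : 0 < ε) (hv : 0 < v) (hg : g ≠ 0)
    (hfρ : ∀ j ∈ f.support, ∀ k ∈ f.support, j ≡ k [MOD ρ])
    (hgρ : ∀ j ∈ g.support, ∀ k ∈ f.support, j ≡ i * k + 1 [MOD ρ])
    (hfmon : f.natTrailingDegree < f.natDegree)
    (hfg : weightedWronskian (i * v - ε) v f g = (ρ : F[X]) * f ^ (i + 1)) :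
    ρ * v < ε * f.natDegree + v := by
  by_contra! hdeg
  have hf : f ≠ 0 := Polynomial.ne_zero_of_natDegree_gt hfmon
  obtain ⟨h, rfl⟩ := pow_dvd_of_weightedWronskian_eq hε hf hg hfρ hgρ hfmon hdeg hfg
  have hρ : 1 < ρ := by
    have : 0 < ε * f.natDegree := Nat.mul_pos hε (by omega)
    by_contra! hρ
    have := Nat.mul_le_mul_right v hρ
    omega
  have hfh := cofactor_eq_of_weightedWronskian_pow_mul_eq hf hfg
  have hsub := support_subsingleton_of_cofactor_eq hε hv (by omega)
    (nextCoeff_eq_zero_of_support_modEq hρ hfρ) hfh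
  exact hfmon.ne (hsub (Polynomial.natTrailingDegree_mem_support_of_nonzero hf)
    (Polynomial.natDegree_mem_support_of_nonzero hf))

end Univariate
section Bivariate

open Polynomial (derivative)
open scoped Polynomial

/-- The specialization `P ↦ P(1, y)`. The exponents of `y` determine the points of the support of a
`(ρ, σ)`-homogeneous `P` with `ρ ≠ 0`, so nothing is lost on such polynomials. -/
def dehomogenize {A : Type*} [CommSemiring A] : MvPolynomial (Fin 2) A →ₐ[A] A[X] :=
  aeval ![1, Polynomial.X]

lemma dehomogenize_monomial {A : Type*} [CommSemiring A] (d : Fin 2 →₀ ℕ) (c : A) :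
    dehomogenize (monomial d c) = Polynomial.monomial (d 1) c := by
  rw [dehomogenize, aeval_monomial, Finsupp.prod_fintype _ _ (by simp)]
  simp [← Polynomial.C_mul_X_pow_eq_monomial]

lemma dehomogenize_X_zero {A : Type*} [CommSemiring A] :
    dehomogenize (X 0 : MvPolynomial (Fin 2) A) = 1 := aeval_X _ 0

lemma dehomogenize_X_one {A : Type*} [CommSemiring A] :
    dehomogenize (X 1 : MvPolynomial (Fin 2) A) = Polynomial.X := aeval_X _ 1

lemma dehomogenize_pderiv_one {A : Type*} [CommSemiring A] (P : MvPolynomial (Fin 2) A) :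
    dehomogenize (pderiv 1 P) = derivative (dehomogenize P) := by
  induction P using MvPolynomial.induction_on' with
  | monomial d c => simp [pderiv_monomial, dehomogenize_monomial, Polynomial.derivative_monomial]
  | add P Q hP hQ => simp only [map_add, hP, hQ]

lemma coeff_dehomogenize {A : Type*} [CommSemiring A] (P : MvPolynomial (Fin 2) A) (j : ℕ) :
    (dehomogenize P).coeff j = ∑ d ∈ P.support with d 1 = j, P.coeff d := by
  conv_lhs => rw [P.as_sum, map_sum, Polynomial.finsetSum_coeff]
  simp only [dehomogenize_monomial, Polynomial.coeff_monomial, Finset.sum_filter]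

lemma sum_weight_smul_X_mul_pderiv {ι A : Type*} [Fintype ι] [CommRing A] {w : ι → ℤ} {n : ℤ}
    {P : MvPolynomial ι A} (hP : IsWeightedHomogeneous w P n) :
    ∑ i, w i • (X i * pderiv i P) = n • P := by
  have hmon (d) (hd : d ∈ P.support) : ∑ i, w i • (X i * pderiv i (monomial d (P.coeff d))) =
      n • monomial d (P.coeff d) := by
    rw [← hP (mem_support_iff.1 hd), Finsupp.weight_apply, Finsupp.sum_fintype _ _ (by simp),
      Finset.sum_smul]
    refine Finset.sum_congr rfl fun i _ => ?_
    rw [X_mul_pderiv_monomial, smul_assoc, smul_comm]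
  conv_lhs => rw [P.as_sum]
  conv_rhs => rw [P.as_sum]
  simp only [map_sum, Finset.mul_sum, Finset.smul_sum]
  rw [Finset.sum_comm]
  simpa only [Finset.smul_sum] using Finset.sum_congr rfl hmon

variable {F : Type*} [Field F] {ρ σ v w : ℤ} {P G R : MvPolynomial (Fin 2) F} {p q e : ℕ × ℕ}

lemma mem_Supp_iff : p ∈ Supp P ↔ Finsupp.single 0 p.1 + Finsupp.single 1 p.2 ∈ P.support :=
  mem_support_iff.symm

lemma mk_mem_Supp_iff {d : Fin 2 →₀ ℕ} : (d 0, d 1) ∈ Supp P ↔ d ∈ P.support := by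
  have hd : Finsupp.single 0 (d 0) + Finsupp.single 1 (d 1) = d := by
    rw [← Fin.sum_univ_two (fun i => Finsupp.single i (d i)), Finsupp.univ_sum_single]
  rw [mem_support_iff, ← hd]
  simp [Supp]

lemma weight_vec (d : Fin 2 →₀ ℕ) : Finsupp.weight ![ρ, σ] d = ρ * d 0 + σ * d 1 := by
  simp [Finsupp.weight_apply, Finsupp.sum_fintype, mul_comm]

lemma weight_eq_of_mem_Supp (hP : IsWeightedHomogeneous ![ρ, σ] P v) (hp : p ∈ Supp P) :
    ρ * p.1 + σ * p.2 = v := by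
  have := hP hp
  rw [weight_vec] at this
  simpa using this

lemma IsHomog.isWeightedHomogeneous (hP : IsHomog ρ σ P) (hp : p ∈ Supp P) :
    IsWeightedHomogeneous ![ρ, σ] P (ρ * p.1 + σ * p.2) := fun d hd => by
  rw [weight_vec]
  exact hP _ (mk_mem_Supp_iff.2 (mem_support_iff.2 hd)) p hp

lemma IsHomog.exists_isWeightedHomogeneous (hP : IsHomog ρ σ P) :
    ∃ w, IsWeightedHomogeneous ![ρ, σ] P w := by
  rcases (Supp P).eq_empty_or_nonempty with hP0 | ⟨p, hp⟩
  · refine ⟨0, fun d hd => ?_⟩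
    simpa [hP0] using mk_mem_Supp_iff.2 (mem_support_iff.2 hd)
  · exact ⟨_, hP.isWeightedHomogeneous hp⟩

lemma exists_mk_mem_Supp_of_mem_support_dehomogenize {j : ℕ}
    (hj : j ∈ (dehomogenize P).support) : ∃ a, (a, j) ∈ Supp P := by
  rw [Polynomial.mem_support_iff, coeff_dehomogenize] at hj
  obtain ⟨d, hd, -⟩ := Finset.exists_ne_zero_of_sum_ne_zero hj
  obtain ⟨hdP, rfl⟩ := Finset.mem_filter.1 hd
  exact ⟨d 0, mk_mem_Supp_iff.2 hdP⟩

lemma eq_of_mem_Supp_of_snd_eq (hρ : ρ ≠ 0) (hP : IsWeightedHomogeneous ![ρ, σ] P v)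
    (hp : p ∈ Supp P) (hq : q ∈ Supp P) (hpq : p.2 = q.2) : p = q := by
  have h := (weight_eq_of_mem_Supp hP hp).trans (weight_eq_of_mem_Supp hP hq).symm
  rw [hpq, add_left_inj, mul_right_inj' hρ, Nat.cast_inj] at h
  exact Prod.ext h hpq

lemma snd_mem_support_dehomogenize (hρ : ρ ≠ 0) (hP : IsWeightedHomogeneous ![ρ, σ] P v)
    (hp : p ∈ Supp P) : p.2 ∈ (dehomogenize P).support := by
  have hsum : (dehomogenize P).coeff p.2 =
      P.coeff (Finsupp.single 0 p.1 + Finsupp.single 1 p.2) := by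
    rw [coeff_dehomogenize]
    refine Finset.sum_eq_single_of_mem _ (by simpa using mem_Supp_iff.1 hp) fun d hd hne => ?_
    obtain ⟨hdP, hd1⟩ := Finset.mem_filter.1 hd
    have := eq_of_mem_Supp_of_snd_eq hρ hP (mk_mem_Supp_iff.2 hdP) hp hd1
    refine absurd ?_ hne
    ext i
    fin_cases i <;> simp [← this]
  rw [Polynomial.mem_support_iff, hsum]
  exact hp

lemma Supp_nonempty_iff : (Supp P).Nonempty ↔ P ≠ 0 := by
  rw [← support_nonempty]
  exact ⟨fun ⟨_, hp⟩ => ⟨_, mem_Supp_iff.1 hp⟩, fun ⟨_, hd⟩ => ⟨_, mk_mem_Supp_iff.2 hd⟩⟩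

lemma dehomogenize_ne_zero (hρ : ρ ≠ 0) (hP : IsWeightedHomogeneous ![ρ, σ] P v)
    (hP0 : P ≠ 0) : dehomogenize P ≠ 0 := by
  obtain ⟨p, hp⟩ := Supp_nonempty_iff.2 hP0
  exact Polynomial.nonempty_support_iff.1 ⟨_, snd_mem_support_dehomogenize hρ hP hp⟩

lemma natTrailingDegree_dehomogenize_lt (hρ : ρ ≠ 0) (hP : IsWeightedHomogeneous ![ρ, σ] P v)
    (hmon : ¬ IsMonomial P) :
    (dehomogenize P).natTrailingDegree < (dehomogenize P).natDegree := by
  obtain ⟨p, hp, q, hq, hpq⟩ := Set.not_subsingleton_iff.1 hmon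
  have hmem {r} (hr : r ∈ Supp P) := snd_mem_support_dehomogenize hρ hP hr
  have hne : p.2 ≠ q.2 := mt (eq_of_mem_Supp_of_snd_eq hρ hP hp hq) hpq
  have hlo {r} (hr : r ∈ Supp P) := Polynomial.natTrailingDegree_le_of_mem_supp _ (hmem hr)
  have hhi {r} (hr : r ∈ Supp P) := Polynomial.le_natDegree_of_mem_supp _ (hmem hr)
  have := hlo hp
  have := hlo hq
  have := hhi hp
  have := hhi hq
  omega

lemma IsEn.natDegree_dehomogenize (hρ : ρ ≠ 0) (hP : IsHomog ρ σ P) (he : IsEn ρ σ P e) :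
    (dehomogenize P).natDegree = e.2 := by
  have hen := he.1.1
  have hwP := hP.isWeightedHomogeneous hen
  refine le_antisymm (Polynomial.natDegree_le_iff_coeff_eq_zero.2 fun j hj => ?_)
    (Polynomial.le_natDegree_of_mem_supp _ (snd_mem_support_dehomogenize hρ hwP hen))
  by_contra hcoeff
  obtain ⟨a, ha⟩ := exists_mk_mem_Supp_of_mem_support_dehomogenize
    (Polynomial.mem_support_iff.2 hcoeff)
  exact hj.not_ge (he.2 (a, j) ⟨ha, (hP _ ha e hen).trans he.1.2⟩)

lemma isWeightedHomogeneous_Jb (hG : IsWeightedHomogeneous ![ρ, σ] G w)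
    (hR : IsWeightedHomogeneous ![ρ, σ] R v) :
    IsWeightedHomogeneous ![ρ, σ] (Jb G R) (w + v - (ρ + σ)) := by
  have hx {P : MvPolynomial (Fin 2) F} {u : ℤ} (hP : IsWeightedHomogeneous ![ρ, σ] P u) :
      IsWeightedHomogeneous ![ρ, σ] (pderiv 0 P) (u - ρ) := hP.pderiv (by simp)
  have hy {P : MvPolynomial (Fin 2) F} {u : ℤ} (hP : IsWeightedHomogeneous ![ρ, σ] P u) :
      IsWeightedHomogeneous ![ρ, σ] (pderiv 1 P) (u - σ) := hP.pderiv (by simp)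
  have h₁ := (hx hG).mul (hy hR)
  have h₂ := (hx hR).mul (hy hG)
  rw [show w - ρ + (v - σ) = w + v - (ρ + σ) by ring] at h₁
  rw [show v - ρ + (w - σ) = w + v - (ρ + σ) by ring] at h₂
  exact (weightedHomogeneousSubmodule F ![ρ, σ] _).sub_mem h₁ h₂

lemma weight_eq_of_Jb_eq_pow {i : ℕ} (hG : IsWeightedHomogeneous ![ρ, σ] G w)
    (hR : IsWeightedHomogeneous ![ρ, σ] R v) (hR0 : R ≠ 0) (hGR : Jb G R = R ^ i) :
    w + v - (ρ + σ) = i * v := by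
  rw [← nsmul_eq_mul]
  exact IsWeightedHomogeneous.inj_right (pow_ne_zero i hR0)
    (hGR ▸ isWeightedHomogeneous_Jb hG hR) (hR.pow i)

lemma mul_dehomogenize_pderiv_zero (hP : IsWeightedHomogeneous ![ρ, σ] P v) :
    (ρ : F[X]) * dehomogenize (pderiv 0 P) +
      (σ : F[X]) * (Polynomial.X * derivative (dehomogenize P)) = (v : F[X]) * dehomogenize P := by
  simpa [dehomogenize_X_zero, dehomogenize_X_one, dehomogenize_pderiv_one] using
    congrArg dehomogenize (sum_weight_smul_X_mul_pderiv hP)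

lemma mul_dehomogenize_Jb (hG : IsWeightedHomogeneous ![ρ, σ] G w)
    (hR : IsWeightedHomogeneous ![ρ, σ] R v) :
    (ρ : F[X]) * dehomogenize (Jb G R) =
      weightedWronskian w v (dehomogenize R) (dehomogenize G) := by
  rw [Jb, weightedWronskian, map_sub, map_mul, map_mul, dehomogenize_pderiv_one,
    dehomogenize_pderiv_one]
  linear_combination derivative (dehomogenize R) * mul_dehomogenize_pderiv_zero hG -
    derivative (dehomogenize G) * mul_dehomogenize_pderiv_zero hR

lemma modEq_of_mem_support_dehomogenize {ρ i j k c : ℕ} {b : ℤ} (hρσ : IsCoprime (ρ : ℤ) σ)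
    (hG : IsWeightedHomogeneous ![(ρ : ℤ), σ] G (i * v + ρ * b + σ * c))
    (hR : IsWeightedHomogeneous ![(ρ : ℤ), σ] R v)
    (hj : j ∈ (dehomogenize G).support) (hk : k ∈ (dehomogenize R).support) :
    j ≡ i * k + c [MOD ρ] := by
  obtain ⟨m, hm⟩ := exists_mk_mem_Supp_of_mem_support_dehomogenize hj
  obtain ⟨n, hn⟩ := exists_mk_mem_Supp_of_mem_support_dehomogenize hk
  have hGw := weight_eq_of_mem_Supp hG hm
  have hRw := weight_eq_of_mem_Supp hR hn
  rw [← Int.natCast_modEq_iff, Int.modEq_iff_dvd]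
  refine hρσ.dvd_of_dvd_mul_left ⟨m - i * n - b, ?_⟩
  push_cast
  linear_combination i * hRw - hGw

lemma mul_lt_of_Jb_eq_pow [CharZero F] {ρ ε v i : ℕ} (hρσ : IsCoprime (ρ : ℤ) σ) (hρ : 0 < ρ)
    (hε : 0 < ε) (hρσε : -(ρ + σ) = ε) (hv : 0 < v) (hG : IsWeightedHomogeneous ![(ρ : ℤ), σ] G w)
    (hR : IsWeightedHomogeneous ![(ρ : ℤ), σ] R v) (hmon : ¬ IsMonomial R)
    (hGR : Jb G R = R ^ (i + 1)) :
    ρ * v < ε * (dehomogenize R).natDegree + v := by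
  have hρ0 : (ρ : ℤ) ≠ 0 := Nat.cast_ne_zero.2 hρ.ne'
  have hR0 : R ≠ 0 := Supp_nonempty_iff.1 (Set.not_subsingleton_iff.1 hmon).nonempty
  have hG0 : G ≠ 0 := by
    rintro rfl
    exact pow_ne_zero (i + 1) hR0 (by simp [← hGR, Jb])
  have hw : w = i * v + ρ * (1 : ℤ) + σ * (1 : ℕ) := by
    have := weight_eq_of_Jb_eq_pow hG hR hR0 hGR
    push_cast at this ⊢
    linear_combination this
  have hbr : weightedWronskian (i * v - ε) v (dehomogenize R) (dehomogenize G) =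
      (ρ : F[X]) * dehomogenize R ^ (i + 1) := by
    have hwε : (i * v - ε : ℤ) = w := by
      rw [hw, ← hρσε]
      push_cast
      ring
    rw [hwε, ← mul_dehomogenize_Jb hG hR, hGR, map_pow, Int.cast_natCast]
  refine mul_lt_of_weightedWronskian_eq hε hv (dehomogenize_ne_zero hρ0 hG hG0)
    (fun j hj k hk => ?_)
    (fun j hj k hk => modEq_of_mem_support_dehomogenize hρσ (hw ▸ hG) hR hj hk)
    (natTrailingDegree_dehomogenize_lt hρ0 hR hmon) hbr
  simpa using modEq_of_mem_support_dehomogenize (i := 1) (b := 0) (c := 0) hρσ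
    (by simpa using hR) hR hj hk

/-- The conditions that an admissible chain puts on a single one of its edges `R`, in direction
`(ρ, σ)`, with upper end `e`. The start point of the edge and (vi) are left out, and (vii) is
weakened to positivity of the weight of `e`. -/
structure IsAdmissibleEdge (ρ σ : ℤ) (R : MvPolynomial (Fin 2) F) (e : ℕ × ℕ) : Prop where
  isCoprime : IsCoprime ρ σ
  pos : 0 < ρ
  add_neg : ρ + σ < 0
  isHomog : IsHomog ρ σ R
  not_isMonomial : ¬ IsMonomial R
  isEn : IsEn ρ σ R e
  weight_pos : 0 < ρ * e.1 + σ * e.2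
  exists_Jb_eq_pow : ∃ (G : MvPolynomial (Fin 2) F) (i : ℕ),
    1 ≤ i ∧ IsHomog ρ σ G ∧ Jb G R = R ^ i

theorem IsAdmissibleEdge.weight_lt_sub [CharZero F] (h : IsAdmissibleEdge ρ σ R e) :
    ρ * e.1 + σ * e.2 < (e.1 : ℤ) - e.2 := by
  obtain ⟨hρσ, hρ, hneg, hR, hmon, he, hpos, G, i, hi, hG, hGR⟩ := h
  obtain ⟨i, rfl⟩ := Nat.exists_eq_add_of_le' hi
  obtain ⟨w, hwG⟩ := hG.exists_isWeightedHomogeneous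
  have hwR := hR.isWeightedHomogeneous he.1.1
  have hdeg := he.natDegree_dehomogenize hρ.ne' hR
  lift ρ to ℕ using hρ.le
  obtain ⟨v, hv⟩ := Int.eq_ofNat_of_zero_le hpos.le
  obtain ⟨ε, hε⟩ := Int.eq_ofNat_of_zero_le (neg_pos.2 hneg).le
  rw [hv] at hwR hpos ⊢
  have hlt : ρ * v < ε * e.2 + v :=
    hdeg ▸ mul_lt_of_Jb_eq_pow hρσ (by omega) (by omega) hε (by omega) hwG hwR hmon hGR
  have hlt' : (ρ : ℤ) * v < ρ * (e.1 - e.2) := by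
    zify at hlt
    linear_combination hlt - hv - e.2 * hε
  exact lt_of_mul_lt_mul_left hlt' hρ.le

theorem stmt16_general [CharZero F] (ρ σ : ℤ) (R : MvPolynomial (Fin 2) F) (wp n' : ℕ) :
    ¬ IsAdmissibleEdge ρ σ R (wp * n', wp * (n' - 1)) := by
  intro h
  have hlt := h.weight_lt_sub
  have hpos := h.weight_pos
  obtain _ | n := n'
  · simp at hpos
  have hdvd : (wp : ℤ) ∣ ρ * (wp * (n + 1) : ℕ) + σ * (wp * (n + 1 - 1) : ℕ) := by
    rw [add_tsub_cancel_right]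
    exact ⟨ρ * (n + 1) + σ * n, by push_cast; ring⟩
  have hle := Int.le_of_dvd hpos hdvd
  push_cast [add_tsub_cancel_right] at hlt hle
  linarith

lemma PossibleA0.exists_isAdmissibleEdge [CharZero F] (h : PossibleA0 F e) (he : 0 < e.2) :
    ∃ (ρ σ : ℤ) (R : MvPolynomial (Fin 2) F), IsAdmissibleEdge ρ σ R e := by
  obtain ⟨k, ch, rfl⟩ := h
  have hk : 1 ≤ k := by
    obtain ⟨l, -, hC0⟩ := ch.hC0
    by_contra! h0
    obtain rfl : k = 0 := by omega
    simp [hC0] at he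
  obtain ⟨hgcd, hρ, hneg⟩ := ch.hdir k hk le_rfl
  exact ⟨_, _, ch.Rp k, Int.isCoprime_iff_gcd_eq_one.2 hgcd, hρ, hneg, ch.hhom k hk le_rfl,
    ch.hmono k hk le_rfl, ch.hen k hk le_rfl, hρ.trans_le (ch.hval k hk le_rfl),
    ch.hG k hk le_rfl⟩

end Bivariate

/-- Proposition "casos imposibles": for `℘ ≥ 1` and `n' ≥ 2`, the point
`(℘n', ℘(n'−1))` is not a possible `A₀′`. -/
theorem stmt16 (K : Type*) [Field K] [CharZero K]
    (wp n' : ℕ) (hwp : 1 ≤ wp) (hn' : 2 ≤ n') :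
    ¬ PossibleA0 K (wp * n', wp * (n' - 1)) := by
  intro h
  obtain ⟨ρ, σ, R, hR⟩ := h.exists_isAdmissibleEdge (Nat.mul_pos hwp (by omega))
  exact stmt16_general ρ σ R wp n' hR

end
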